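/- Let q > 1 be a real number and let m be the largest integer smaller than q. A sequence (c_i) = c_1 c_2 ... with all c_i ∈ {0, ..., m} is the unique expansion in base q of some number x ∈ J_q (i.e., (c_i) is univoque in base q) if and only if c_{n+1} c_{n+2} ... < α_1(q) α_2(q) ... lexicographically whenever c_n < m, and the complemented tail (m − c_{n+1})(m − c_{n+2}) ... < α_1(q) α_2(q) ... lexicographically whenever c_n > 0. -/

import Mathlib

/-!
Write `val q d n = ∑ d_{n+i} q^{-(i+1)}` for the value of the `n`-th tail of `d`. Tail values obey
the recursion `x_{n+1} = q x_n - d_n`, and so do the remainders `r_n ∈ (0, 1]` of the quasi-greedy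
algorithm for `1`; two solutions of the recursion with the same first `k` digits satisfy
`x_k - y_k = q^k (x_0 - y_0)` (`rec_sub`). Comparing with `(r_n)` shows that a sequence of value
`< 1` is lexicographically smaller than `α` (`lexLt_of_val_lt`), and conversely that, if every tail
of `c` following a digit `< m` is smaller than `α`, then all these tails have value `< 1`
(`val_lt_of_lexLt`): at the first difference with `α` the tail meets a digit `< m` again, so
`V - 1 < q^{-(k+1)} (V' - 1)` for the value `V'` of a later tail of the same kind, and iteration
of this contraction of bounded quantities gives `V ≤ 1`, hence `V < 1`.

Finally `c` has another expansion of the same value that is larger at the first difference iff some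
tail following a digit `< m` has value `≥ 1`: increase that digit by one, and expand the tail value
minus one by the greedy algorithm. Expansions that are smaller at the first difference are handled
by the digit reflection `d ↦ m - d`, which preserves univoqueness.
-/

noncomputable section

/-- The largest integer smaller than `q`, as a natural number (for `q > 1` this is `⌈q⌉ - 1`). -/
def topDigit (q : ℝ) : ℕ := ⌈q⌉.toNat - 1

/-- Greedy digit associated to a remainder `y` : the largest nonnegative integer `b` with
`b < q` and `b ≤ q * y`. -/
def gDigit (q y : ℝ) : ℕ := min (topDigit q) ⌊q * y⌋₊

/-- Remainders of the greedy algorithm in base `q` starting from `x`. -/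
def gRem (q x : ℝ) : ℕ → ℝ
  | 0 => x
  | n + 1 => q * gRem q x n - gDigit q (gRem q x n)

/-- The greedy expansion of `x` in base `q`, `0`-indexed: `greedy q x n` is the digit `b_{n+1}`,
i.e. the largest integer smaller than `q` such that `∑_{i ≤ n} (greedy q x i) / q^(i+1) ≤ x`. -/
def greedy (q x : ℝ) (n : ℕ) : ℕ := gDigit q (gRem q x n)

/-- Quasi-greedy digit associated to a remainder `y` : the largest nonnegative integer `b` with
`b < q` and `b < q * y` (it is `0` when no such integer exists, matching the convention that the
quasi-greedy expansion of `0` is `0^∞`). -/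
def qgDigit (q y : ℝ) : ℕ := min (topDigit q) (⌈q * y⌉.toNat - 1)

/-- Remainders of the quasi-greedy algorithm in base `q` starting from `x`. -/
def qgRem (q x : ℝ) : ℕ → ℝ
  | 0 => x
  | n + 1 => q * qgRem q x n - qgDigit q (qgRem q x n)

/-- The quasi-greedy expansion of `x` in base `q`, `0`-indexed: `quasiGreedy q x n` is the digit
`a_{n+1}`, i.e. the largest integer smaller than `q` with `∑_{i ≤ n} (quasiGreedy q x i) / q^(i+1) < x`
(with the convention `quasiGreedy q 0 = 0^∞`). -/
def quasiGreedy (q x : ℝ) (n : ℕ) : ℕ := qgDigit q (qgRem q x n)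

/-- `alphaSeq q` is the quasi-greedy expansion of `1` in base `q` (`0`-indexed:
`alphaSeq q (i-1) = α_i(q)`). -/
def alphaSeq (q : ℝ) : ℕ → ℕ := quasiGreedy q 1

/-- Strict lexicographic order on digit sequences. -/
def lexLt (a b : ℕ → ℕ) : Prop := ∃ n, (∀ i, i < n → a i = b i) ∧ a n < b n

/-- Lexicographic order on digit sequences. -/
def lexLe (a b : ℕ → ℕ) : Prop := lexLt a b ∨ a = b

/-- `c` is an expansion of `x` in base `q`: the digits are nonnegative integers smaller than `q`
and `x = ∑_{i≥0} c_i / q^(i+1)`. -/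
def IsExpansion (q : ℝ) (c : ℕ → ℕ) (x : ℝ) : Prop :=
  (∀ i, (c i : ℝ) < q) ∧ x = ∑' i : ℕ, (c i : ℝ) / q ^ (i + 1)

/-- The interval `J_q = [0, (⌈q⌉-1)/(q-1)]` of numbers having an expansion in base `q`. -/
def Jset (q : ℝ) : Set ℝ := Set.Icc 0 (((⌈q⌉ : ℝ) - 1) / (q - 1))

/-- `USet q` is the set `𝒰_q` of numbers `x ∈ J_q` having a unique expansion in base `q`. -/
def USet (q : ℝ) : Set ℝ := {x | x ∈ Jset q ∧ ∃! c, IsExpansion q c x}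

/-- `USeq q` is the set `𝒰_q'` of univoque sequences in base `q`, i.e. sequences that are the
unique expansion in base `q` of some number. -/
def USeq (q : ℝ) : Set (ℕ → ℕ) :=
  {c | ∃ x, IsExpansion q c x ∧ ∀ c', IsExpansion q c' x → c' = c}

/-- The set `𝒰` of univoque bases: `q > 1` such that `1` has a unique expansion in base `q`. -/
def UnivBases : Set ℝ := {q | 1 < q ∧ ∃! c, IsExpansion q c 1}

/-- The set `𝒱_q`: numbers `x ∈ J_q` whose quasi-greedy expansion `(a_i)` satisfies
`overline{a_{n+1} a_{n+2} …} ≤ α_1 α_2 …` whenever `a_n > 0`. -/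
def VSet (q : ℝ) : Set ℝ :=
  {x | x ∈ Jset q ∧ ∀ n, 0 < quasiGreedy q x n →
    lexLe (fun i => topDigit q - quasiGreedy q x (n + 1 + i)) (alphaSeq q)}

/-- `VSeq q` is the set `𝒱_q'` of quasi-greedy expansions of elements of `𝒱_q`. -/
def VSeq (q : ℝ) : Set (ℕ → ℕ) := (fun x => quasiGreedy q x) '' VSet q

/-- The set `𝒱` of bases `q > 1` with `overline{α_{k+1} α_{k+2} …} ≤ α_1 α_2 …` for all `k ≥ 1`. -/
def VBases : Set ℝ :=
  {q | 1 < q ∧ ∀ k, 1 ≤ k → lexLe (fun i => topDigit q - alphaSeq q (k + i)) (alphaSeq q)}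

/-- A digit sequence is infinite if it has infinitely many nonzero terms. -/
def InfiniteSeq (c : ℕ → ℕ) : Prop := ∀ N, ∃ i, N ≤ i ∧ c i ≠ 0

/-- A digit sequence is ultimately periodic if some tail of it is periodic. -/
def UltimatelyPeriodic (c : ℕ → ℕ) : Prop := ∃ n p, 0 < p ∧ ∀ i, n ≤ i → c (i + p) = c i

end

/-- Value in base `q` of the `n`-th tail `d_n d_{n+1} …` of the digit sequence `d`. -/
noncomputable def val (q : ℝ) (d : ℕ → ℕ) (n : ℕ) : ℝ := ∑' i : ℕ, (d (n + i) : ℝ) / q ^ (i + 1)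

/-- Digitwise reflection `d ↦ m - d`, where `m` is the largest digit. -/
noncomputable def reflDigits (q : ℝ) (d : ℕ → ℕ) : ℕ → ℕ := fun i => topDigit q - d i

/-! ### Digits and tail values -/

lemma natCast_lt_iff {q : ℝ} (hq : 1 < q) (n : ℕ) : (n : ℝ) < q ↔ n ≤ topDigit q := by
  have h1 : (n : ℤ) < ⌈q⌉ ↔ (n : ℝ) < q := by
    rw [Int.lt_ceil]; simp
  rw [← h1, topDigit]
  have : (1 : ℤ) < ⌈q⌉ := by rw [Int.lt_ceil]; simpa using hq
  omega

lemma one_le_topDigit {q : ℝ} (hq : 1 < q) : 1 ≤ topDigit q :=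
  (natCast_lt_iff hq 1).1 (by simpa using hq)

lemma le_topDigit_add_one {q : ℝ} (hq : 1 < q) : q ≤ topDigit q + 1 := by
  by_contra h
  have := (natCast_lt_iff hq (topDigit q + 1)).1 (by push_cast; linarith)
  omega

lemma summable_val {q : ℝ} (hq : 1 < q) {d : ℕ → ℕ} (hd : ∀ i, d i ≤ topDigit q) (n : ℕ) :
    Summable fun i : ℕ => (d (n + i) : ℝ) / q ^ (i + 1) := by
  have hg : Summable fun i : ℕ => (topDigit q : ℝ) * (q⁻¹) ^ (i + 1) :=
    ((summable_nat_add_iff 1).2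
      (summable_geometric_of_lt_one (by positivity) (inv_lt_one_of_one_lt₀ hq))).mul_left _
  refine Summable.of_nonneg_of_le (fun i => by positivity) (fun i => ?_) hg
  rw [inv_pow, div_eq_mul_inv]
  have : (d (n + i) : ℝ) ≤ topDigit q := by exact_mod_cast hd _
  gcongr

lemma val_nonneg {q : ℝ} (hq : 1 < q) (d : ℕ → ℕ) (n : ℕ) : 0 ≤ val q d n :=
  tsum_nonneg fun i => by positivity

lemma val_succ {q : ℝ} (hq : 1 < q) {d : ℕ → ℕ} (hd : ∀ i, d i ≤ topDigit q) (n : ℕ) :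
    val q d (n + 1) = q * val q d n - d n := by
  have h : val q d n = d n / q + val q d (n + 1) / q := by
    unfold val
    rw [(summable_val hq hd n).tsum_eq_zero_add, ← tsum_div_const]
    congr 1
    · simp
    · refine tsum_congr fun i => ?_
      rw [show n + (i + 1) = n + 1 + i by ring]
      field_simp
      ring
  rw [h]
  field_simp
  ring

lemma val_tail (q : ℝ) (c : ℕ → ℕ) (n k : ℕ) :
    val q (fun i => c (n + i)) k = val q c (n + k) := by
  simp [val, add_assoc]

lemma val_add_val_reflDigits {q : ℝ} (hq : 1 < q) {d : ℕ → ℕ} (hd : ∀ i, d i ≤ topDigit q) (n : ℕ) :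
    val q d n + val q (reflDigits q d) n = topDigit q / (q - 1) := by
  have hr : ∀ i, reflDigits q d i ≤ topDigit q := fun i => Nat.sub_le _ _
  have hm : ∀ i, (fun _ : ℕ => topDigit q) i ≤ topDigit q := fun i => le_rfl
  have h1 : val q d n + val q (reflDigits q d) n = val q (fun _ => topDigit q) n := by
    unfold val
    rw [← (summable_val hq hd n).tsum_add (summable_val hq hr n)]
    refine tsum_congr fun i => ?_
    rw [reflDigits, Nat.cast_sub (hd _)]
    ring
  have h2 : val q (fun _ => topDigit q) (n + 1) = val q (fun _ => topDigit q) n := rfl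
  rw [val_succ hq hm] at h2
  rw [h1, eq_div_iff (by linarith)]
  linarith

lemma val_le {q : ℝ} (hq : 1 < q) {d : ℕ → ℕ} (hd : ∀ i, d i ≤ topDigit q) (n : ℕ) :
    val q d n ≤ topDigit q / (q - 1) := by
  have := val_add_val_reflDigits hq hd n
  have := val_nonneg hq (reflDigits q d) n
  linarith

/-- Two solutions of the remainder recursion whose first `k` digits agree. -/
lemma rec_sub {q : ℝ} {x y : ℕ → ℝ} {a b : ℕ → ℕ} (hx : ∀ n, x (n + 1) = q * x n - a n)
    (hy : ∀ n, y (n + 1) = q * y n - b n) (k : ℕ) (h : ∀ i, i < k → a i = b i) :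
    x k - y k = q ^ k * (x 0 - y 0) := by
  induction k with
  | zero => simp
  | succ k ih =>
    rw [hx, hy, h k (by omega), pow_succ]
    have := ih fun i hi => h i (by omega)
    linear_combination q * this

/-- A bounded solution of the remainder recursion starts at the value of its digit sequence. -/
lemma val_eq_of_rec {q : ℝ} (hq : 1 < q) {d : ℕ → ℕ} (hd : ∀ i, d i ≤ topDigit q) {r : ℕ → ℝ}
    (hr : ∀ n, r (n + 1) = q * r n - d n) (B : ℝ) (h0 : ∀ n, 0 ≤ r n) (hB : ∀ n, r n ≤ B) :
    val q d 0 = r 0 := by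
  by_contra hne
  have hpos : 0 < |val q d 0 - r 0| := abs_pos.2 (sub_ne_zero.2 hne)
  obtain ⟨k, hk⟩ := pow_unbounded_of_one_lt ((topDigit q / (q - 1) + B) / |val q d 0 - r 0|) hq
  rw [div_lt_iff₀ hpos] at hk
  have h := rec_sub (val_succ hq hd) hr k fun _ _ => rfl
  have h2 : |val q d k - r k| = q ^ k * |val q d 0 - r 0| := by
    rw [h, abs_mul, abs_of_pos (pow_pos (by linarith) k)]
  have h3 : |val q d k - r k| ≤ topDigit q / (q - 1) + B := by
    have := val_le hq hd k
    have := val_nonneg hq d k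
    have := h0 k
    have := hB k
    rw [abs_le]
    constructor <;> linarith
  linarith

/-! ### The quasi-greedy expansion of one -/

lemma alphaSeq_le (q : ℝ) (n : ℕ) : alphaSeq q n ≤ topDigit q := min_le_left _ _

lemma qgRem_mem {q : ℝ} (hq : 1 < q) (n : ℕ) : 0 < qgRem q 1 n ∧ qgRem q 1 n ≤ 1 := by
  induction n with
  | zero => simp [qgRem]
  | succ n ih =>
    obtain ⟨h0, h1⟩ := ih
    set y := qgRem q 1 n with hy
    have hpos : 0 < q * y := by positivity
    have hle : q * y ≤ q := by nlinarith
    have hc : 0 < ⌈q * y⌉ := Int.ceil_pos.2 hpos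
    have hcl : ⌈q * y⌉ ≤ ⌈q⌉ := Int.ceil_le_ceil hle
    -- as `y ≤ 1`, the cap `topDigit q` on the digit is not active
    have hdig : ((qgDigit q y : ℕ) : ℤ) = ⌈q * y⌉ - 1 := by
      unfold qgDigit topDigit
      omega
    have hdig' : ((qgDigit q y : ℕ) : ℝ) = (⌈q * y⌉ : ℝ) - 1 := by exact_mod_cast hdig
    have e : qgRem q 1 (n + 1) = q * y - ((⌈q * y⌉ : ℝ) - 1) := by
      rw [← hdig', hy]; rfl
    have := Int.le_ceil (q * y)
    have := Int.ceil_lt_add_one (q * y)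
    rw [e]
    constructor <;> linarith

lemma qgRem_succ (q : ℝ) (n : ℕ) : qgRem q 1 (n + 1) = q * qgRem q 1 n - alphaSeq q n := rfl

lemma val_alphaSeq {q : ℝ} (hq : 1 < q) : val q (alphaSeq q) 0 = 1 :=
  val_eq_of_rec hq (alphaSeq_le q) (qgRem_succ q) 1 (fun n => (qgRem_mem hq n).1.le)
    fun n => (qgRem_mem hq n).2

lemma lexLt_trichotomy (a b : ℕ → ℕ) : lexLt a b ∨ a = b ∨ lexLt b a := by
  classical
  by_cases h : a = b
  · exact Or.inr (Or.inl h)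
  have hex : ∃ n, a n ≠ b n := Function.ne_iff.1 h
  have hmin : ∀ i, i < Nat.find hex → a i = b i := fun i hi => not_not.1 (Nat.find_min hex hi)
  rcases lt_or_gt_of_ne (Nat.find_spec hex) with h1 | h1
  · exact Or.inl ⟨_, hmin, h1⟩
  · exact Or.inr (Or.inr ⟨_, fun i hi => (hmin i hi).symm, h1⟩)

lemma lexLt_of_val_lt {q : ℝ} (hq : 1 < q) {d : ℕ → ℕ} (hd : ∀ i, d i ≤ topDigit q)
    (h : val q d 0 < 1) : lexLt d (alphaSeq q) := by
  rcases lexLt_trichotomy d (alphaSeq q) with h1 | h1 | ⟨k, hk, hlt⟩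
  · exact h1
  · rw [h1, val_alphaSeq hq] at h
    exact absurd h (lt_irrefl _)
  · exfalso
    have e := rec_sub (val_succ hq hd) (qgRem_succ q) k fun i hi => (hk i hi).symm
    have e1 := val_succ hq hd k
    have e2 := qgRem_succ q k
    have h0 := val_nonneg hq d (k + 1)
    have hr := (qgRem_mem hq (k + 1)).2
    have hdig : (alphaSeq q k : ℝ) + 1 ≤ d k := by exact_mod_cast hlt
    have hneg : q ^ k * (val q d 0 - qgRem q 1 0) < 0 :=
      mul_neg_of_pos_of_neg (pow_pos (by linarith) k) (sub_neg.2 h)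
    have : q * (val q d k - qgRem q 1 k) < 0 :=
      mul_neg_of_pos_of_neg (by linarith) (by rw [e]; exact hneg)
    linarith

/-- One step of the contraction: a tail smaller than `α` meets a digit `< m` at its first
difference with `α`, say at index `k`, and the excess over `1` of the tail after that digit is more
than `q ^ (k + 1)` times the original excess. -/
lemma val_step {q : ℝ} (hq : 1 < q) {c : ℕ → ℕ} (hc : ∀ i, c i ≤ topDigit q) {n : ℕ}
    (h : lexLt (fun i => c (n + 1 + i)) (alphaSeq q)) :
    ∃ k, c (n + 1 + k) < topDigit q ∧
      q ^ (k + 1) * (val q c (n + 1) - 1) < val q c (n + 1 + k + 1) - 1 := by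
  obtain ⟨k, hk, hlt⟩ := h
  refine ⟨k, lt_of_lt_of_le hlt (alphaSeq_le q k), ?_⟩
  have e := rec_sub (val_succ hq (d := fun i => c (n + 1 + i)) fun i => hc _) (qgRem_succ q) k hk
  rw [val_tail, val_tail] at e
  have e1 := val_succ hq hc (n + 1 + k)
  have e2 := qgRem_succ q k
  have hr := (qgRem_mem hq (k + 1)).1
  have hdig : (c (n + 1 + k) : ℝ) + 1 ≤ alphaSeq q k := by exact_mod_cast hlt
  have e3 : qgRem q 1 0 = 1 := rfl
  rw [e3, add_zero] at e
  rw [pow_succ, mul_right_comm, ← e]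
  linarith

lemma val_lt_of_lexLt {q : ℝ} (hq : 1 < q) {c : ℕ → ℕ} (hc : ∀ i, c i ≤ topDigit q)
    (h : ∀ n, c n < topDigit q → lexLt (fun i => c (n + 1 + i)) (alphaSeq q)) (n : ℕ)
    (hn : c n < topDigit q) : val q c (n + 1) < 1 := by
  have hM : (0 : ℝ) ≤ topDigit q / (q - 1) := div_nonneg (by positivity) (by linarith)
  have hle : ∀ j n, c n < topDigit q →
      q ^ j * (val q c (n + 1) - 1) ≤ topDigit q / (q - 1) := by
    intro j
    induction j with
    | zero =>
      intro n _
      have := val_le hq hc (n + 1)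
      linarith
    | succ j ih =>
      intro n hn
      rcases le_or_gt (val q c (n + 1) - 1) 0 with hv | hv
      · exact (mul_nonpos_of_nonneg_of_nonpos (by positivity) hv).trans hM
      obtain ⟨k, hk, hlt⟩ := val_step hq hc (h n hn)
      have h1 : q * (val q c (n + 1) - 1) ≤ q ^ (k + 1) * (val q c (n + 1) - 1) := by
        gcongr
        exact le_self_pow₀ hq.le (by omega)
      calc q ^ (j + 1) * (val q c (n + 1) - 1) = q ^ j * (q * (val q c (n + 1) - 1)) := by ring
        _ ≤ q ^ j * (val q c (n + 1 + k + 1) - 1) := by gcongr; linarith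
        _ ≤ _ := ih _ hk
  have hle1 : ∀ n, c n < topDigit q → val q c (n + 1) - 1 ≤ 0 := by
    intro n hn
    by_contra! hv
    obtain ⟨j, hj⟩ := pow_unbounded_of_one_lt (topDigit q / (q - 1) / (val q c (n + 1) - 1)) hq
    rw [div_lt_iff₀ hv] at hj
    exact absurd (hle j n hn) (not_le.2 hj)
  obtain ⟨k, hk, hlt⟩ := val_step hq hc (h n hn)
  have := hle1 _ hk
  by_contra! hv
  have : 0 ≤ q ^ (k + 1) * (val q c (n + 1) - 1) := mul_nonneg (by positivity) (by linarith)
  linarith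

/-! ### Existence of expansions, and reflection -/

lemma exists_val_eq {q : ℝ} (hq : 1 < q) {y : ℝ} (h0 : 0 ≤ y) (h1 : y ≤ topDigit q / (q - 1)) :
    ∃ d : ℕ → ℕ, (∀ i, d i ≤ topDigit q) ∧ val q d 0 = y := by
  have hd : ∀ i, greedy q y i ≤ topDigit q := fun i => min_le_left _ _
  have hmem : ∀ n, 0 ≤ gRem q y n ∧ gRem q y n ≤ topDigit q / (q - 1) := by
    intro n
    induction n with
    | zero => exact ⟨h0, h1⟩
    | succ n ih =>
      obtain ⟨ih0, ih1⟩ := ih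
      have e : gRem q y (n + 1) = q * gRem q y n - gDigit q (gRem q y n) := rfl
      rw [e]
      set z := gRem q y n
      have hqz : 0 ≤ q * z := by positivity
      have hf := Nat.floor_le hqz
      have hf2 := Nat.lt_floor_add_one (q * z)
      rw [le_div_iff₀ (by linarith)] at ih1 ⊢
      rcases le_total (topDigit q) ⌊q * z⌋₊ with hle | hle
      · rw [gDigit, min_eq_left hle]
        have : (topDigit q : ℝ) ≤ ⌊q * z⌋₊ := by exact_mod_cast hle
        constructor
        · linarith
        · nlinarith
      · rw [gDigit, min_eq_right hle]
        have := le_topDigit_add_one hq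
        constructor
        · linarith
        · nlinarith
  exact ⟨greedy q y, hd, val_eq_of_rec hq hd (fun _ => rfl) _ (fun n => (hmem n).1)
    fun n => (hmem n).2⟩

/-- Univoqueness expressed through `val` and the bound on the digits. -/
lemma mem_USeq_iff {q : ℝ} (hq : 1 < q) {c : ℕ → ℕ} (hc : ∀ i, c i ≤ topDigit q) :
    c ∈ USeq q ↔ ∀ c' : ℕ → ℕ, (∀ i, c' i ≤ topDigit q) → val q c' 0 = val q c 0 → c' = c := by
  have key : ∀ (d : ℕ → ℕ) x, IsExpansion q d x ↔ (∀ i, d i ≤ topDigit q) ∧ x = val q d 0 := by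
    intro d x
    simp only [IsExpansion, natCast_lt_iff hq, val, zero_add]
  simp only [USeq, Set.mem_ofPred_eq, key]
  constructor
  · rintro ⟨x, ⟨-, rfl⟩, h⟩ c' h1 h2
    exact h c' ⟨h1, h2.symm⟩
  · intro h
    exact ⟨_, ⟨hc, rfl⟩, fun c' h' => h c' h'.1 h'.2.symm⟩

lemma reflDigits_le (q : ℝ) (d : ℕ → ℕ) (i : ℕ) : reflDigits q d i ≤ topDigit q := Nat.sub_le _ _

lemma reflDigits_reflDigits {q : ℝ} {d : ℕ → ℕ} (hd : ∀ i, d i ≤ topDigit q) :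
    reflDigits q (reflDigits q d) = d :=
  funext fun i => Nat.sub_sub_self (hd i)

lemma val_reflDigits_eq {q : ℝ} (hq : 1 < q) {c d : ℕ → ℕ} (hc : ∀ i, c i ≤ topDigit q)
    (hd : ∀ i, d i ≤ topDigit q) (h : val q d 0 = val q c 0) :
    val q (reflDigits q d) 0 = val q (reflDigits q c) 0 := by
  have := val_add_val_reflDigits hq hc 0
  have := val_add_val_reflDigits hq hd 0
  linarith

lemma reflDigits_mem_USeq {q : ℝ} (hq : 1 < q) {c : ℕ → ℕ} (hc : ∀ i, c i ≤ topDigit q)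
    (h : c ∈ USeq q) : reflDigits q c ∈ USeq q := by
  rw [mem_USeq_iff hq (reflDigits_le q c)]
  rw [mem_USeq_iff hq hc] at h
  intro c' hc' hv
  have := val_reflDigits_eq hq (reflDigits_le q c) hc' hv
  rw [reflDigits_reflDigits hc] at this
  rw [← h _ (reflDigits_le q c') this, reflDigits_reflDigits hc']

/-! ### The two directions -/

/-- If a tail following a digit `< m` had value `≥ 1`, that digit could be increased. -/
lemma val_lt_of_mem_USeq {q : ℝ} (hq : 1 < q) {c : ℕ → ℕ} (hc : ∀ i, c i ≤ topDigit q)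
    (h : c ∈ USeq q) (n : ℕ) (hn : c n < topDigit q) : val q c (n + 1) < 1 := by
  rw [mem_USeq_iff hq hc] at h
  by_contra! hv
  obtain ⟨e, he, hev⟩ := exists_val_eq hq (y := val q c (n + 1) - 1) (by linarith)
    (by have := val_le hq hc (n + 1); linarith)
  let c' : ℕ → ℕ := fun i => if i < n then c i else if i = n then c n + 1 else e (i - (n + 1))
  have hlow : ∀ i, i < n → c' i = c i := fun i hi => by simp [c', hi]
  have hmid : c' n = c n + 1 := by simp [c']
  have htail : (fun i => c' (n + 1 + i)) = e := by
    funext i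
    have h1 : ¬ n + 1 + i < n := by omega
    have h2 : n + 1 + i ≠ n := by omega
    simp only [c', if_neg h1, if_neg h2]
    congr 1
    omega
  have hc' : ∀ i, c' i ≤ topDigit q := by
    intro i
    simp only [c']
    split_ifs
    · exact hc i
    · exact hn
    · exact he _
  have ht : val q c' (n + 1) = val q c (n + 1) - 1 := by
    rw [← hev, ← htail, val_tail, add_zero]
  have e1 := val_succ hq hc' n
  have e2 := val_succ hq hc n
  rw [hmid] at e1
  push_cast at e1
  have e3 := rec_sub (val_succ hq hc') (val_succ hq hc) n hlow
  have e4 : q * (val q c' n - val q c n) = 0 := by linarith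
  have hq0 : q ≠ 0 := by linarith
  rw [e3] at e4
  have e5 : val q c' 0 - val q c 0 = 0 := by simpa [hq0] using e4
  have := congrFun (h c' hc' (sub_eq_zero.1 e5)) n
  omega

/-- If all tails of `c` following a digit `< m` have value `< 1`, then no expansion of the same
value is lexicographically larger than `c`. -/
lemma not_lexLt_of_val_lt {q : ℝ} (hq : 1 < q) {c c' : ℕ → ℕ} (hc : ∀ i, c i ≤ topDigit q)
    (hc' : ∀ i, c' i ≤ topDigit q) (h : ∀ n, c n < topDigit q → val q c (n + 1) < 1)
    (hv : val q c' 0 = val q c 0) : ¬ lexLt c c' := by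
  rintro ⟨k, hk, hlt⟩
  have e := rec_sub (val_succ hq hc) (val_succ hq hc') k hk
  rw [hv, sub_self, mul_zero, sub_eq_zero] at e
  have e1 := val_succ hq hc k
  have e2 := val_succ hq hc' k
  rw [← e] at e2
  have := h k (lt_of_lt_of_le hlt (hc' k))
  have := val_nonneg hq c' (k + 1)
  have : (c k : ℝ) + 1 ≤ c' k := by exact_mod_cast hlt
  linarith

/-- Theorem 1.1(ii). Let `q > 1` and `m` the largest integer smaller than `q`.
A sequence `(c_i) ∈ {0,…,m}^ℕ` is univoque in base `q` iff `c_{n+1} c_{n+2} … < α_1 α_2 …`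
whenever `c_n < m` and `overline{c_{n+1} c_{n+2} …} < α_1 α_2 …` whenever `c_n > 0`. -/
theorem univoque_sequence_characterization (q : ℝ) (hq : 1 < q) (c : ℕ → ℕ)
    (hc : ∀ i, c i ≤ topDigit q) :
    c ∈ USeq q ↔
      ((∀ n, c n < topDigit q → lexLt (fun i => c (n + 1 + i)) (alphaSeq q)) ∧
       (∀ n, 0 < c n → lexLt (fun i => topDigit q - c (n + 1 + i)) (alphaSeq q))) := by
  have hm := one_le_topDigit hq
  have hr := reflDigits_le q c
  have hiff : ∀ n, reflDigits q c n < topDigit q ↔ 0 < c n := by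
    intro n
    have := hc n
    unfold reflDigits
    omega
  constructor
  · intro h
    have h' := reflDigits_mem_USeq hq hc h
    refine ⟨fun n hn => lexLt_of_val_lt hq (fun i => hc _) ?_,
      fun n hn => lexLt_of_val_lt hq (fun i => Nat.sub_le _ _) ?_⟩
    · rw [val_tail]
      exact val_lt_of_mem_USeq hq hc h n hn
    · have := val_lt_of_mem_USeq hq hr h' n ((hiff n).2 hn)
      rw [← add_zero (n + 1), ← val_tail] at this
      exact this
  · rintro ⟨h1, h2⟩
    have v1 := val_lt_of_lexLt hq hc h1
    have v2 := val_lt_of_lexLt hq hr fun n hn => h2 n ((hiff n).1 hn)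
    rw [mem_USeq_iff hq hc]
    intro c' hc' hv
    rcases lexLt_trichotomy c c' with h | h | ⟨k, hk, hlt⟩
    · exact absurd h (not_lexLt_of_val_lt hq hc hc' v1 hv)
    · exact h.symm
    · refine absurd ?_ (not_lexLt_of_val_lt hq hr (reflDigits_le q c') v2
        (val_reflDigits_eq hq hc hc' hv))
      refine ⟨k, fun i hi => ?_, ?_⟩
      · simp only [reflDigits, hk i hi]
      · have := hc k
        simp only [reflDigits]
        omega
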